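/- Let A = (a_{i,j}) be a positive semi-definite symmetric real n×n matrix. Then the hafnian of the 2n×2n block matrix [[A, A], [A, A]] (consisting of four copies of A) satisfies haf [[A, A], [A, A]] ≥ ∏_{i=1}^n a_{i,i}, with equality if and only if A has a zero row or A is a diagonal matrix. -/

import Mathlib

open Matrix BigOperators

/-- The hafnian of an `n × n` real matrix: for `n = 2m` it is
`(1/(m! 2^m)) Σ_π C_{π(1),π(2)} ⋯ C_{π(2m-1),π(2m)}`, and it is `0` for odd `n`. -/
noncomputable def haf {n : ℕ} (C : Matrix (Fin n) (Fin n) ℝ) : ℝ :=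
  if Even n then
    (1 / ((n / 2).factorial * 2 ^ (n / 2)) : ℝ) *
      ∑ π : Equiv.Perm (Fin n),
        ∏ i : Fin (n / 2), C (π ⟨2 * i.val, by omega⟩) (π ⟨2 * i.val + 1, by omega⟩)
  else 0

/-- The permanent of an `n × n` real matrix. -/
noncomputable def per {n : ℕ} (M : Matrix (Fin n) (Fin n) ℝ) : ℝ :=
  ∑ π : Equiv.Perm (Fin n), ∏ i, M i (π i)

/-- The equivalence used to view a block `2n × 2n` matrix (indexed by `Fin n ⊕ Fin n`)
as a matrix indexed by `Fin (2 * n)`. -/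
def blockIndex (n : ℕ) : (Fin n ⊕ Fin n) ≃ Fin (2 * n) :=
  finSumFinEquiv.trans (finCongr (by omega))

set_option linter.unusedSectionVars false
set_option linter.unusedSimpArgs false

namespace HafAux
open MvPolynomial

variable {ι : Type} [Fintype ι] [DecidableEq ι]

/-- linear form with coefficient vector `v` -/
noncomputable def lin (v : ι → ℝ) : MvPolynomial ι ℝ := ∑ s, C (v s) * X s

/-- Laplacian -/
noncomputable def lap (F : MvPolynomial ι ℝ) : MvPolynomial ι ℝ := ∑ s, pderiv s (pderiv s F)

/-- directional derivative -/
noncomputable def dir (v : ι → ℝ) (F : MvPolynomial ι ℝ) : MvPolynomial ι ℝ :=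
  ∑ s, C (v s) * pderiv s F

/-- iterated carre du champ -/
noncomputable def Gam : ℕ → MvPolynomial ι ℝ → MvPolynomial ι ℝ → MvPolynomial ι ℝ
  | 0, F, G => F * G
  | (j+1), F, G => ∑ s, Gam j (pderiv s F) (pderiv s G)

theorem pd_comm (i j : ι) (F : MvPolynomial ι ℝ) :
    pderiv i (pderiv j F) = pderiv j (pderiv i F) := by
  have h : ⁅(pderiv i : Derivation ℝ (MvPolynomial ι ℝ) (MvPolynomial ι ℝ)),
      (pderiv j : Derivation ℝ (MvPolynomial ι ℝ) (MvPolynomial ι ℝ))⁆ = 0 := by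
    apply MvPolynomial.derivation_ext
    intro k
    rw [Derivation.commutator_apply]
    simp only [pderiv_X, Pi.single_apply]
    split_ifs <;> simp
  have := congrArg
    (fun D : Derivation ℝ (MvPolynomial ι ℝ) (MvPolynomial ι ℝ) => D F) h
  simp only [Derivation.commutator_apply, Derivation.zero_apply] at this
  exact sub_eq_zero.mp this

theorem pd_lin (s : ι) (v : ι → ℝ) : pderiv s (lin v) = C (v s) := by
  simp [lin, pderiv_X, Pi.single_apply, pderiv_C_mul]

theorem pd_lap (s : ι) (F : MvPolynomial ι ℝ) : pderiv s (lap F) = lap (pderiv s F) := by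
  simp only [lap, map_sum]
  refine Finset.sum_congr rfl fun t _ => ?_
  rw [pd_comm s t, pd_comm s t]

theorem pd_dir (s : ι) (v : ι → ℝ) (F : MvPolynomial ι ℝ) :
    pderiv s (dir v F) = dir v (pderiv s F) := by
  simp only [dir, map_sum, pderiv_C_mul]
  refine Finset.sum_congr rfl fun t _ => ?_
  rw [pd_comm s t]

theorem dir_mul (v : ι → ℝ) (F G : MvPolynomial ι ℝ) :
    dir v (F * G) = dir v F * G + F * dir v G := by
  simp only [dir, pderiv_mul, Finset.sum_mul, Finset.mul_sum, ← Finset.sum_add_distrib]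
  refine Finset.sum_congr rfl fun t _ => ?_
  ring

theorem dir_lin (v w : ι → ℝ) : dir v (lin w) = C (∑ s, v s * w s) := by
  simp [dir, pd_lin]

theorem lap_add (F G : MvPolynomial ι ℝ) : lap (F + G) = lap F + lap G := by
  simp [lap, Finset.sum_add_distrib]

theorem lap_zero : lap (0 : MvPolynomial ι ℝ) = 0 := by simp [lap]

theorem lap_sum {κ : Type} (S : Finset κ) (f : κ → MvPolynomial ι ℝ) :
    lap (∑ k ∈ S, f k) = ∑ k ∈ S, lap (f k) := by
  simp only [lap, map_sum]
  exact Finset.sum_comm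

theorem lap_C_mul (c : ℝ) (F : MvPolynomial ι ℝ) : lap (C c * F) = C c * lap F := by
  simp [lap, pderiv_C_mul, Finset.mul_sum]

theorem lap_lin_mul (v : ι → ℝ) (F : MvPolynomial ι ℝ) :
    lap (lin v * F) = lin v * lap F + 2 * dir v F := by
  simp only [lap, dir, pderiv_mul, pd_lin, map_add, pderiv_C, Finset.mul_sum,
    ← Finset.sum_add_distrib]
  refine Finset.sum_congr rfl fun t _ => ?_
  ring

theorem Gam_add_left (j : ℕ) (F F' G : MvPolynomial ι ℝ) :
    Gam j (F + F') G = Gam j F G + Gam j F' G := by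
  induction j generalizing F F' G with
  | zero => simp [Gam, add_mul]
  | succ j ih => simp [Gam, ih, Finset.sum_add_distrib]

theorem Gam_comm (j : ℕ) (F G : MvPolynomial ι ℝ) : Gam j F G = Gam j G F := by
  induction j generalizing F G with
  | zero => simp [Gam, mul_comm]
  | succ j ih =>
    simp only [Gam]
    exact Finset.sum_congr rfl fun t _ => ih _ _

theorem Gam_C_mul_left (j : ℕ) (c : ℝ) (F G : MvPolynomial ι ℝ) :
    Gam j (C c * F) G = C c * Gam j F G := by
  induction j generalizing F G with
  | zero => simp [Gam, mul_assoc]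
  | succ j ih => simp [Gam, ih, Finset.mul_sum, pderiv_C_mul]

theorem Gam_zero_left (j : ℕ) (G : MvPolynomial ι ℝ) : Gam j 0 G = 0 := by
  induction j generalizing G with
  | zero => simp [Gam]
  | succ j ih => simp [Gam, ih]

theorem Gam_sum_right {κ : Type} (S : Finset κ) (j : ℕ) (F : MvPolynomial ι ℝ)
    (f : κ → MvPolynomial ι ℝ) :
    Gam j F (∑ k ∈ S, f k) = ∑ k ∈ S, Gam j F (f k) := by
  classical
  induction S using Finset.induction_on with
  | empty => simp [Gam_comm j F, Gam_zero_left]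
  | insert a S ha ih =>
    rw [Finset.sum_insert ha, Finset.sum_insert ha, Gam_comm, Gam_add_left, Gam_comm, ← ih,
      Gam_comm j F (∑ k ∈ S, f k)]

theorem lap_Gam (j : ℕ) (F G : MvPolynomial ι ℝ) :
    lap (Gam j F G) = Gam j (lap F) G + Gam j F (lap G) + 2 * Gam (j+1) F G := by
  induction j generalizing F G with
  | zero =>
    simp only [Gam, lap, Finset.sum_mul, Finset.mul_sum, ← Finset.sum_add_distrib]
    refine Finset.sum_congr rfl fun t _ => ?_
    simp only [pderiv_mul, map_add]
    ring
  | succ j ih =>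
    rw [Gam, lap_sum]
    simp only [ih]
    simp only [Finset.sum_add_distrib, ← Finset.mul_sum, ← pd_lap]
    rfl

/-- remainder set -/
def RS (F : MvPolynomial ι ℝ) (N : ℕ) : Set (MvPolynomial ι ℝ) :=
  {P | ∃ k l j : ℕ, k + l + j = N ∧ k + l ≠ 0 ∧ P = Gam j (lap^[k] F) (lap^[l] F)}

theorem lap_iter (F : MvPolynomial ι ℝ) (N : ℕ) :
    ∃ R ∈ AddSubmonoid.closure (RS F N), lap^[N] (F * F) = 2 ^ N * Gam N F F + R := by
  induction N with
  | zero => exact ⟨0, zero_mem _, by simp [Gam]⟩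
  | succ N ih =>
    obtain ⟨R, hR, h⟩ := ih
    have key : ∀ R ∈ AddSubmonoid.closure (RS F N),
        lap R ∈ AddSubmonoid.closure (RS F (N+1)) := by
      intro R hR
      induction hR using AddSubmonoid.closure_induction with
      | mem x hx =>
        obtain ⟨k, l, j, h1, h2, rfl⟩ := hx
        rw [lap_Gam, two_mul, ← Function.iterate_succ_apply' lap, ← Function.iterate_succ_apply' lap]
        refine add_mem (add_mem ?_ ?_) (add_mem ?_ ?_) <;> apply AddSubmonoid.subset_closure
        · exact ⟨k+1, l, j, by omega, by omega, rfl⟩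
        · exact ⟨k, l+1, j, by omega, by omega, rfl⟩
        · exact ⟨k, l, j+1, by omega, by omega, rfl⟩
        · exact ⟨k, l, j+1, by omega, by omega, rfl⟩
      | zero => rw [lap_zero]; exact zero_mem _
      | add x y _ _ hx hy => rw [lap_add]; exact add_mem hx hy
    refine ⟨(2 ^ N : ℕ) • (Gam N (lap F) F + Gam N F (lap F)) + lap R, ?_, ?_⟩
    · refine add_mem (nsmul_mem (add_mem ?_ ?_) _) (key R hR) <;> apply AddSubmonoid.subset_closure
      · exact ⟨1, 0, N, by omega, by omega, rfl⟩
      · exact ⟨0, 1, N, by omega, by omega, rfl⟩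
    · rw [Function.iterate_succ_apply', h, lap_add]
      have : (2 ^ N : MvPolynomial ι ℝ) = C (2 ^ N : ℝ) := by
        rw [C_pow]; rfl
      rw [this, lap_C_mul, ← this, lap_Gam]
      simp only [nsmul_eq_mul]
      push_cast
      ring

/-- constant term of `Gam` -/
noncomputable def Q (n : ℕ) (F G : MvPolynomial ι ℝ) : ℝ := constantCoeff (Gam n F G)

theorem Q_succ (n : ℕ) (F G : MvPolynomial ι ℝ) :
    Q (n+1) F G = ∑ s, Q n (pderiv s F) (pderiv s G) := by simp [Q, Gam]

theorem Q_self_nonneg (n : ℕ) (F : MvPolynomial ι ℝ) : 0 ≤ Q n F F := by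
  induction n generalizing F with
  | zero => simp [Q, Gam, mul_self_nonneg]
  | succ n ih => rw [Q_succ]; exact Finset.sum_nonneg fun _ _ => ih _

theorem Q_add_left (j : ℕ) (F F' G : MvPolynomial ι ℝ) :
    Q j (F + F') G = Q j F G + Q j F' G := by simp [Q, Gam_add_left]

theorem Q_C_mul_left (j : ℕ) (c : ℝ) (F G : MvPolynomial ι ℝ) :
    Q j (C c * F) G = c * Q j F G := by simp [Q, Gam_C_mul_left]

theorem Q_comm (j : ℕ) (F G : MvPolynomial ι ℝ) : Q j F G = Q j G F := by
  rw [Q, Gam_comm, Q]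

theorem cc_lin (v : ι → ℝ) : constantCoeff (lin v) = 0 := by simp [lin]

theorem Q_dir (n : ℕ) (v : ι → ℝ) (F G : MvPolynomial ι ℝ) :
    Q n F (dir v G) = ∑ s, v s * Q n F (pderiv s G) := by
  simp only [dir, Q, Gam_sum_right, map_sum]
  refine Finset.sum_congr rfl fun t _ => ?_
  rw [Gam_comm, Gam_C_mul_left, Gam_comm]; simp

theorem Q_adj (n : ℕ) (v : ι → ℝ) (F H : MvPolynomial ι ℝ) :
    Q (n+1) (lin v * F) H = (n+1) * Q n F (dir v H) := by
  induction n generalizing F H with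
  | zero =>
    rw [Q_succ, Q_dir]
    simp [Q, Gam, pd_lin, pderiv_mul, cc_lin, mul_assoc, mul_left_comm]
  | succ n ih =>
    rw [Q_succ]
    simp only [pderiv_mul, pd_lin, Q_add_left, Q_C_mul_left, ih, Finset.sum_add_distrib]
    rw [← Q_dir, ← Finset.mul_sum, Q_succ n F]
    simp only [pd_dir]
    push_cast
    ring

theorem Q_lin_mul (n : ℕ) (v : ι → ℝ) (F : MvPolynomial ι ℝ) :
    Q (n+1) (lin v * F) (lin v * F) =
      (n+1) * ((∑ s, v s * v s) * Q n F F + Q n (lin v * dir v F) F) := by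
  rw [Q_adj, dir_mul, dir_lin, Q_comm, Q_add_left, Q_C_mul_left]

theorem Q_rem (n : ℕ) (v : ι → ℝ) (F : MvPolynomial ι ℝ) :
    Q (n+1) (lin v * dir v F) F = (n+1) * Q n (dir v F) (dir v F) := Q_adj _ _ _ _

theorem Q_rem_nonneg (n : ℕ) (v : ι → ℝ) (F : MvPolynomial ι ℝ) :
    0 ≤ Q n (lin v * dir v F) F := by
  cases n with
  | zero => simp [Q, Gam, cc_lin]
  | succ n => rw [Q_rem]; have := Q_self_nonneg n (dir v F); positivity

theorem Q_prod_ge {κ : Type} [DecidableEq κ] (b : κ → ι → ℝ) (S : Finset κ) :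
    (S.card.factorial : ℝ) * ∏ i ∈ S, (∑ s, b i s * b i s) ≤
      Q S.card (∏ i ∈ S, lin (b i)) (∏ i ∈ S, lin (b i)) := by
  induction S using Finset.induction_on with
  | empty => simp [Q, Gam]
  | insert a S ha ih =>
    rw [Finset.card_insert_of_notMem ha, Finset.prod_insert ha, Finset.prod_insert ha, Q_lin_mul,
      Nat.factorial_succ]
    have h1 := Q_rem_nonneg S.card (b a) (∏ i ∈ S, lin (b i))
    have h2 : 0 ≤ ∑ s, b a s * b a s := Finset.sum_nonneg fun _ _ => mul_self_nonneg _
    have h3 := mul_le_mul_of_nonneg_left ih h2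
    push_cast
    have : (0:ℝ) ≤ S.card + 1 := by positivity
    nlinarith [mul_le_mul_of_nonneg_left (add_le_add h3 h1) this]

theorem Q_pos (m : ℕ) (G : MvPolynomial ι ℝ) (hG : G.IsHomogeneous m) (h : Q m G G = 0) :
    G = 0 := by
  induction m generalizing G with
  | zero =>
    rw [← totalDegree_zero_iff_isHomogeneous, totalDegree_eq_zero_iff_eq_C] at hG
    rw [hG] at h
    rw [hG]
    simpa [Q, Gam] using h
  | succ m ih =>
    rw [Q_succ, Finset.sum_eq_zero_iff_of_nonneg (fun _ _ => Q_self_nonneg _ _)] at h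
    have h0 : ∀ s, pderiv s G = 0 := fun s => ih _ hG.pderiv (h s (Finset.mem_univ _))
    have := hG.sum_X_mul_pderiv
    simp only [h0, mul_zero, Finset.sum_const_zero] at this
    have h' := this.symm
    rw [smul_eq_zero] at h'
    simpa using h'

theorem hom_lin (v : ι → ℝ) : (lin v).IsHomogeneous 1 :=
  IsHomogeneous.sum _ _ _ fun s _ => by
    simpa using (isHomogeneous_C ι (v s)).mul (isHomogeneous_X ℝ s)

theorem hom_prod {κ : Type} (b : κ → ι → ℝ) (S : Finset κ) :
    (∏ i ∈ S, lin (b i)).IsHomogeneous S.card := by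
  simpa using IsHomogeneous.prod S (fun i => lin (b i)) (fun _ => 1) fun i _ => hom_lin _

theorem hom_dir (v : ι → ℝ) (m : ℕ) (F : MvPolynomial ι ℝ) (hF : F.IsHomogeneous m) :
    (dir v F).IsHomogeneous (m - 1) :=
  IsHomogeneous.sum _ _ _ fun s _ => by
    simpa using (isHomogeneous_C ι (v s)).mul hF.pderiv

theorem hom_lap (m : ℕ) (F : MvPolynomial ι ℝ) (hF : F.IsHomogeneous m) :
    (lap F).IsHomogeneous (m - 2) :=
  IsHomogeneous.sum _ _ _ fun s _ => hF.pderiv.pderiv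

theorem hom_lap_iter (k m : ℕ) (F : MvPolynomial ι ℝ) (hF : F.IsHomogeneous m) :
    (lap^[k] F).IsHomogeneous (m - 2 * k) := by
  induction k with
  | zero => simpa using hF
  | succ k ih =>
    rw [Function.iterate_succ_apply']
    have := hom_lap _ _ ih
    rwa [show m - 2 * k - 2 = m - 2 * (k+1) by omega] at this

theorem Q_hom_zero (j m : ℕ) (F G : MvPolynomial ι ℝ) (hF : F.IsHomogeneous m) (h : j < m) :
    Q j F G = 0 := by
  induction j generalizing m F G with
  | zero =>
    have : constantCoeff F = 0 := by
      rw [constantCoeff_eq]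
      apply hF.coeff_eq_zero
      simp; omega
    simp [Q, Gam, this]
  | succ j ih =>
    rw [Q_succ]
    exact Finset.sum_eq_zero fun s _ => ih (m-1) _ _ hF.pderiv (by omega)

theorem rem_nonneg (n : ℕ) (F R : MvPolynomial ι ℝ) (hF : F.IsHomogeneous n)
    (hR : R ∈ AddSubmonoid.closure (RS F n)) : 0 ≤ constantCoeff R := by
  induction hR using AddSubmonoid.closure_induction with
  | mem x hx =>
    obtain ⟨k, l, j, h1, h2, rfl⟩ := hx
    change 0 ≤ Q j _ _
    rcases lt_trichotomy k l with h | h | h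
    · rw [Q_hom_zero j _ _ _ (hom_lap_iter k n F hF) (by omega)]
    · subst h; exact Q_self_nonneg _ _
    · rw [Q_comm, Q_hom_zero j _ _ _ (hom_lap_iter l n F hF) (by omega)]
  | zero => simp
  | add x y _ _ hx hy => rw [map_add]; exact add_nonneg hx hy

theorem lap_iter_ge (n : ℕ) (F : MvPolynomial ι ℝ) (hF : F.IsHomogeneous n) :
    2 ^ n * Q n F F ≤ constantCoeff (lap^[n] (F * F)) := by
  obtain ⟨R, hR, h⟩ := lap_iter F n
  have := rem_nonneg n F R hF hR
  rw [h, show (2 : MvPolynomial ι ℝ) = C 2 from rfl]; simpa [Q] using this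

theorem lap_iter_zero (k : ℕ) : lap^[k] (0 : MvPolynomial ι ℝ) = 0 := by
  induction k with
  | zero => rfl
  | succ k ih => rw [Function.iterate_succ_apply', ih, lap_zero]

theorem lap_iter_harm (n : ℕ) (F : MvPolynomial ι ℝ) (hF : lap F = 0) :
    constantCoeff (lap^[n] (F * F)) = 2 ^ n * Q n F F := by
  obtain ⟨R, hR, h⟩ := lap_iter F n
  have : R = 0 := by
    clear h
    induction hR using AddSubmonoid.closure_induction with
    | mem x hx =>
      obtain ⟨k, l, j, h1, h2, rfl⟩ := hx
      rcases Nat.eq_zero_or_pos k with hk | hk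
      · obtain ⟨l', rfl⟩ : ∃ l', l = l' + 1 := ⟨l - 1, by omega⟩
        rw [Function.iterate_succ_apply lap l', hF, lap_iter_zero, Gam_comm, Gam_zero_left]
      · obtain ⟨l', rfl⟩ : ∃ l', k = l' + 1 := ⟨k - 1, by omega⟩
        rw [Function.iterate_succ_apply lap l', hF, lap_iter_zero, Gam_zero_left]
    | zero => rfl
    | add x y _ _ hx hy => rw [hx, hy, add_zero]
  rw [h, this, show (2 : MvPolynomial ι ℝ) = C 2 from rfl]; simp [Q]

theorem dir_prod_zero {κ : Type} [DecidableEq κ] (b : κ → ι → ℝ) (v : ι → ℝ) (S : Finset κ)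
    (h : ∀ i ∈ S, ∑ s, v s * b i s = 0) : dir v (∏ i ∈ S, lin (b i)) = 0 := by
  induction S using Finset.induction_on with
  | empty => simp [dir]
  | insert a S ha ih =>
    rw [Finset.prod_insert ha, dir_mul, dir_lin, h a (Finset.mem_insert_self _ _),
      ih fun i hi => h i (Finset.mem_insert_of_mem hi)]
    simp

theorem diag_case {κ : Type} [DecidableEq κ] (b : κ → ι → ℝ)
    (h : ∀ i j, i ≠ j → ∑ s, b i s * b j s = 0) (S : Finset κ) :
    lap (∏ i ∈ S, lin (b i)) = 0 ∧ Q S.card (∏ i ∈ S, lin (b i)) (∏ i ∈ S, lin (b i)) =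
      (S.card.factorial : ℝ) * ∏ i ∈ S, (∑ s, b i s * b i s) := by
  induction S using Finset.induction_on with
  | empty => simp [Q, Gam, lap]
  | insert a S ha ih =>
    have hd : dir (b a) (∏ i ∈ S, lin (b i)) = 0 := by
      apply dir_prod_zero
      intro i hi
      exact h _ _ (by rintro rfl; exact ha hi)
    constructor
    · rw [Finset.prod_insert ha, lap_lin_mul, ih.1, hd]; simp
    · rw [Finset.card_insert_of_notMem ha, Finset.prod_insert ha, Finset.prod_insert ha, Q_lin_mul,
        Nat.factorial_succ, hd, ih.2]
      simp [Q, Gam_zero_left]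
      ring

theorem dir_ne_zero (v w : ι → ℝ) (F : MvPolynomial ι ℝ) (hF : F ≠ 0) (hd : lin w ∣ F)
    (hvw : ∑ s, v s * w s ≠ 0) : dir v F ≠ 0 := by
  intro h0
  have hw : lin w ≠ 0 := fun h => hF (by rw [h] at hd; exact zero_dvd_iff.mp hd)
  have hu : ¬ IsUnit (lin w) := fun h => by
    have := h.map (constantCoeff (σ := ι) (R := ℝ))
    rw [cc_lin] at this
    exact not_isUnit_zero this
  have hpow : ∀ (k : ℕ), dir v (lin w ^ (k+1)) =
      C ((k + 1) * ∑ s, v s * w s) * lin w ^ k := by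
    intro k
    induction k with
    | zero => simp [dir_lin]
    | succ k ih =>
      rw [pow_succ, dir_mul, ih, dir_lin]
      simp only [map_mul, map_add, map_one, Nat.cast_add, Nat.cast_one]
      ring
  have all : ∀ k : ℕ, lin w ^ (k+1) ∣ F := by
    intro k
    induction k with
    | zero => simpa using hd
    | succ k ih =>
      obtain ⟨G, rfl⟩ := ih
      rw [dir_mul, hpow] at h0
      have h1 : lin w ^ k * (C ((k + 1) * ∑ s, v s * w s) * G + lin w * dir v G) = 0 := by
        rw [← h0]; ring
      have h2 := (mul_eq_zero.mp h1).resolve_left (pow_ne_zero _ hw)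
      have hc : ((k:ℝ) + 1) * ∑ s, v s * w s ≠ 0 := mul_ne_zero (by positivity) hvw
      have h3 : lin w ∣ G := by
        refine ⟨C (-(((k:ℝ) + 1) * ∑ s, v s * w s)⁻¹) * dir v G, ?_⟩
        have h4 : (C (((k:ℝ) + 1) * ∑ s, v s * w s)⁻¹ : MvPolynomial ι ℝ) *
            C (((k:ℝ) + 1) * ∑ s, v s * w s) = 1 := by
          rw [← C_mul, inv_mul_cancel₀ hc, C_1]
        rw [C_neg]
        linear_combination (C (((k:ℝ) + 1) * ∑ s, v s * w s)⁻¹ : MvPolynomial ι ℝ) * h2 - G * h4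
      rw [pow_succ (lin w) (k+1)]
      exact mul_dvd_mul_left _ h3
  obtain ⟨k, hk⟩ := FiniteMultiplicity.of_not_isUnit hu hF
  exact hk (all k)

theorem Q_prod_gt {κ : Type} [DecidableEq κ] [Fintype κ] (b : κ → ι → ℝ)
    (hpos : ∀ i, ∑ s, b i s * b i s ≠ 0) (i j : κ) (hij : i ≠ j)
    (h : ∑ s, b i s * b j s ≠ 0) :
    ((Fintype.card κ).factorial : ℝ) * ∏ i, (∑ s, b i s * b i s) <
      Q (Fintype.card κ) (∏ i, lin (b i)) (∏ i, lin (b i)) := by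
  set S := Finset.univ.erase i with hS
  have ha : i ∉ S := by simp [S]
  have hu : (Finset.univ : Finset κ) = insert i S := by simp [S]
  have hjS : j ∈ S := by simp [S, hij.symm]
  rw [← Finset.card_univ, hu, Finset.card_insert_of_notMem ha, Finset.prod_insert ha,
    Finset.prod_insert ha, Q_lin_mul, Nat.factorial_succ]
  have ih := Q_prod_ge b S
  have h2 : 0 ≤ ∑ s, b i s * b i s := Finset.sum_nonneg fun _ _ => mul_self_nonneg _
  have h3 := mul_le_mul_of_nonneg_left ih h2
  have h1 : 0 < Q S.card (lin (b i) * dir (b i) (∏ i ∈ S, lin (b i))) (∏ i ∈ S, lin (b i)) := by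
    obtain ⟨m, hm⟩ : ∃ m, S.card = m + 1 :=
      ⟨S.card - 1, by have := Finset.card_pos.mpr ⟨j, hjS⟩; omega⟩
    rw [hm, Q_rem]
    have hF : ∏ i ∈ S, lin (b i) ≠ 0 := by
      rw [Finset.prod_ne_zero_iff]
      intro k _ hk
      apply hpos k
      have := dir_lin (b k) (b k)
      rw [hk] at this
      apply C_injective ι ℝ
      rw [← this]; simp [dir]
    have hne := dir_ne_zero (b i) (b j) _ hF (Finset.dvd_prod_of_mem _ hjS) h
    have hh := hom_dir (b i) _ _ (hom_prod b S)
    rw [hm] at hh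
    have := (Q_self_nonneg m (dir (b i) (∏ i ∈ S, lin (b i)))).lt_of_ne
      fun h => hne (Q_pos m _ hh h.symm)
    positivity
  push_cast
  have : (0:ℝ) < S.card + 1 := Nat.cast_add_one_pos _
  nlinarith [mul_lt_mul_of_pos_left (add_lt_add_of_le_of_lt h3 h1) this]

theorem pd_prod_finset {κ : Type} [DecidableEq κ] (s : ι) (b : κ → ι → ℝ) (S : Finset κ) :
    pderiv s (∏ j ∈ S, lin (b j)) = ∑ p ∈ S, C (b p s) * ∏ i ∈ S.erase p, lin (b i) := by
  induction S using Finset.induction_on with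
  | empty => simp
  | insert a S ha ih =>
    rw [Finset.prod_insert ha, Finset.sum_insert ha, pderiv_mul, ih, pd_lin,
      Finset.erase_insert ha, Finset.mul_sum]
    congr 1
    refine Finset.sum_congr rfl fun p hp => ?_
    have hne : a ≠ p := by rintro rfl; exact ha hp
    rw [Finset.erase_insert_of_ne hne,
      Finset.prod_insert (fun h => ha (Finset.mem_of_mem_erase h))]
    ring

theorem pd_prod (N : ℕ) (s : ι) (b : Fin (N+1) → ι → ℝ) :
    pderiv s (∏ j, lin (b j)) =
      ∑ p, C (b p s) * ∏ i : Fin N, lin (b (Equiv.swap 0 p i.succ)) := by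
  rw [pd_prod_finset]
  refine Finset.sum_congr rfl fun p _ => ?_
  have : Finset.univ.erase p = Finset.univ.image (fun i : Fin N => Equiv.swap 0 p i.succ) := by
    ext x
    simp only [Finset.mem_erase, Finset.mem_univ, and_true, Finset.mem_image, true_and]
    constructor
    · intro hx
      have h0 : Equiv.swap 0 p x ≠ 0 := by
        intro h
        apply hx
        rw [← Equiv.swap_apply_self 0 p x, h, Equiv.swap_apply_left]
      obtain ⟨i, hi⟩ := Fin.exists_succ_eq.mpr h0
      exact ⟨i, by rw [hi, Equiv.swap_apply_self]⟩
    · rintro ⟨i, rfl⟩ h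
      have h1 : Equiv.swap 0 p i.succ = Equiv.swap 0 p 0 := by rw [h, Equiv.swap_apply_left]
      exact Fin.succ_ne_zero i ((Equiv.swap 0 p).injective h1)
  rw [this, Finset.prod_image]
  intro i _ j _ h
  exact Fin.succ_injective _ ((Equiv.swap 0 p).injective h)

/-- the sum over permutations in the hafnian -/
noncomputable def W (m : ℕ) (b : Fin (2 * m) → ι → ℝ) : ℝ :=
  ∑ π : Equiv.Perm (Fin (2 * m)), ∏ i : Fin m,
    ∑ s, b (π ⟨2 * i.val, by omega⟩) s * b (π ⟨2 * i.val + 1, by omega⟩) s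

theorem lap_prod (N : ℕ) (b : Fin (N+2) → ι → ℝ) :
    lap (∏ j, lin (b j)) = ∑ p, ∑ q : Fin (N+1),
      C (∑ s, b p s * b (Equiv.swap 0 p q.succ) s) *
        ∏ i : Fin N, lin (b (Equiv.swap 0 p (Equiv.swap 0 q i.succ).succ)) := by
  simp only [lap, pd_prod (N+1), map_sum, pderiv_C_mul]
  rw [Finset.sum_comm]
  refine Finset.sum_congr rfl fun p _ => ?_
  have := fun s => pd_prod N s (fun i => b (Equiv.swap 0 p i.succ))
  simp only [this, Finset.mul_sum]
  rw [Finset.sum_comm]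
  refine Finset.sum_congr rfl fun q _ => ?_
  rw [Finset.sum_mul]
  refine Finset.sum_congr rfl fun s _ => ?_
  rw [C_mul]; ring

theorem lap_iter_sum {κ : Type} (n : ℕ) (S : Finset κ) (f : κ → MvPolynomial ι ℝ) :
    lap^[n] (∑ k ∈ S, f k) = ∑ k ∈ S, lap^[n] (f k) := by
  induction n with
  | zero => rfl
  | succ n ih => simp only [Function.iterate_succ_apply', ih, lap_sum]

theorem lap_iter_C_mul (n : ℕ) (c : ℝ) (F : MvPolynomial ι ℝ) :
    lap^[n] (C c * F) = C c * lap^[n] F := by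
  induction n with
  | zero => rfl
  | succ n ih => simp only [Function.iterate_succ_apply', ih, lap_C_mul]

theorem lap_iter_prod (m : ℕ) (b : Fin (2 * m) → ι → ℝ) :
    lap^[m] (∏ j, lin (b j)) = C (W m b) := by
  induction m with
  | zero => simp [W]
  | succ m ih =>
    have h0 := lap_prod (2 * m) b
    rw [Function.iterate_succ_apply]
    refine (congrArg (lap^[m]) h0).trans ?_
    simp only [lap_iter_sum, lap_iter_C_mul, ih, ← C_mul]
    simp only [← map_sum]
    congr 1
    unfold W
    change _ = ∑ π : Equiv.Perm (Fin (2 * m + 1 + 1)), _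
    rw [← Equiv.sum_comp (Equiv.Perm.decomposeFin).symm, Fintype.sum_prod_type]
    refine Finset.sum_congr rfl fun p _ => ?_
    rw [← Equiv.sum_comp (Equiv.Perm.decomposeFin).symm, Fintype.sum_prod_type]
    refine Finset.sum_congr rfl fun q _ => ?_
    rw [Finset.mul_sum]
    refine Finset.sum_congr rfl fun e _ => ?_
    rw [Fin.prod_univ_succ]
    have e0 : (Equiv.Perm.decomposeFin.symm (p, Equiv.Perm.decomposeFin.symm (q, e)))
      (⟨0, by omega⟩ : Fin (2 * m + 1 + 1)) = p := Equiv.Perm.decomposeFin_symm_apply_zero _ _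
    have e1 : (Equiv.Perm.decomposeFin.symm (p, Equiv.Perm.decomposeFin.symm (q, e)))
      (⟨1, by omega⟩ : Fin (2 * m + 1 + 1)) = Equiv.swap 0 p q.succ := by
      have := Equiv.Perm.decomposeFin_symm_apply_succ (Equiv.Perm.decomposeFin.symm (q, e)) p 0
      rw [Equiv.Perm.decomposeFin_symm_apply_zero] at this
      exact this
    have e2 : ∀ (i : ℕ) (hi : i < 2 * m),
      (Equiv.Perm.decomposeFin.symm (p, Equiv.Perm.decomposeFin.symm (q, e)))
      (⟨i + 2, by omega⟩ : Fin (2 * m + 1 + 1)) =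
        Equiv.swap 0 p (Equiv.swap 0 q (e ⟨i, hi⟩).succ).succ := by
      intro i hi
      have := Equiv.Perm.decomposeFin_symm_apply_succ (Equiv.Perm.decomposeFin.symm (q, e)) p
        (Fin.succ ⟨i, hi⟩)
      rw [Equiv.Perm.decomposeFin_symm_apply_succ e q] at this
      exact this
    congr 1
    · refine Finset.sum_congr rfl fun s _ => ?_
      rw [← e1]; nth_rw 1 [← e0]; rfl
    · refine Finset.prod_congr rfl fun i _ => ?_
      refine Finset.sum_congr rfl fun s _ => ?_
      beta_reduce
      rw [← e2, ← e2]
      rfl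

end HafAux

theorem hafnian_doubled_ge_prod_diag (n : ℕ) (A : Matrix (Fin n) (Fin n) ℝ)
    (hA : Aᵀ = A) (hApsd : ∀ x : Fin n → ℝ, 0 ≤ x ⬝ᵥ A *ᵥ x) :
    (∏ i, A i i) ≤ haf ((Matrix.fromBlocks A A A A).submatrix
        (blockIndex n).symm (blockIndex n).symm) ∧
      (haf ((Matrix.fromBlocks A A A A).submatrix
          (blockIndex n).symm (blockIndex n).symm) = ∏ i, A i i
        ↔ (∃ i, ∀ j, A i j = 0) ∨ (∀ i j, i ≠ j → A i j = 0)) := by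
  obtain ⟨d, b, hb⟩ : ∃ (d : ℕ) (b : Fin n → Fin d → ℝ), ∀ i j, A i j = ∑ s, b i s * b j s := by
    have hps : A.PosSemidef := Matrix.PosSemidef.of_dotProduct_mulVec_nonneg
      (by rw [Matrix.IsHermitian, Matrix.conjTranspose_eq_transpose_of_trivial, hA])
      (by simpa using hApsd)
    obtain ⟨m, v, hv⟩ := Matrix.posSemidef_iff_eq_sum_vecMulVec.mp hps
    refine ⟨m, fun i s => v s i, fun i j => ?_⟩
    rw [hv]
    simp [Matrix.sum_apply, Matrix.vecMulVec_apply]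
  set F : MvPolynomial (Fin d) ℝ := ∏ i, HafAux.lin (b i) with hF
  set c : ℝ := 2 ^ n * n.factorial with hc
  have hcpos : 0 < c := by positivity
  have hhaf : c * haf ((Matrix.fromBlocks A A A A).submatrix
        (blockIndex n).symm (blockIndex n).symm) =
      MvPolynomial.constantCoeff (HafAux.lap^[n] (F * F)) := by
    have hFF : F * F = ∏ p : Fin (2 * n), HafAux.lin (b (Sum.elim id id ((blockIndex n).symm p))) := by
      rw [Equiv.prod_comp (blockIndex n).symm (fun p => HafAux.lin (b (Sum.elim id id p))),
        Fintype.prod_sum_type]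
      rfl
    have hent : ∀ p q, (Matrix.fromBlocks A A A A).submatrix
        (blockIndex n).symm (blockIndex n).symm p q =
        ∑ s, b (Sum.elim id id ((blockIndex n).symm p)) s *
          b (Sum.elim id id ((blockIndex n).symm q)) s := by
      intro p q
      rw [← hb, Matrix.submatrix_apply]
      rcases (blockIndex n).symm p with x | x <;> rcases (blockIndex n).symm q with y | y <;> rfl
    have h2 : 2 * n / 2 = n := by omega
    rw [hFF, HafAux.lap_iter_prod n (fun p => b (Sum.elim id id ((blockIndex n).symm p))),
      MvPolynomial.constantCoeff_C, haf, if_pos (even_two_mul n), ← mul_assoc]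
    rw [show c * (1 / (((2 * n / 2).factorial : ℝ) * 2 ^ (2 * n / 2))) = 1 by
      rw [h2, hc]; field_simp, one_mul, HafAux.W]
    refine Finset.sum_congr rfl fun π _ => ?_
    rw [← Equiv.prod_comp (finCongr h2)]
    refine Finset.prod_congr rfl fun i _ => ?_
    rw [hent]
    rfl
  have hge := HafAux.lap_iter_ge n F (by simpa using HafAux.hom_prod b Finset.univ)
  have hQ := HafAux.Q_prod_ge b Finset.univ
  rw [Finset.card_univ, Fintype.card_fin, ← hF] at hQ
  simp only [← hb] at hQ
  rw [← hhaf] at hge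
  have h2n : (0:ℝ) < 2 ^ n := by positivity
  constructor
  · have := mul_le_mul_of_nonneg_left hQ h2n.le
    rw [← mul_assoc, ← hc] at this
    exact le_of_mul_le_mul_left (this.trans hge) hcpos
  constructor
  · intro heq
    by_contra hcon
    push Not at hcon
    obtain ⟨hrow, i, j, hij, hne⟩ := hcon
    have hpos : ∀ i, ∑ s, b i s * b i s ≠ 0 := by
      intro i h0
      rw [Finset.sum_eq_zero_iff_of_nonneg fun _ _ => mul_self_nonneg _] at h0
      obtain ⟨j, hj⟩ := hrow i
      apply hj
      rw [hb]
      refine Finset.sum_eq_zero fun s hs => ?_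
      rw [mul_self_eq_zero.mp (h0 s hs), zero_mul]
    have hgt := HafAux.Q_prod_gt b hpos i j hij (by rwa [← hb])
    rw [Fintype.card_fin, ← hF] at hgt
    simp only [← hb] at hgt
    have := mul_lt_mul_of_pos_left hgt h2n
    rw [← mul_assoc, ← hc, ← heq] at this
    exact absurd (this.trans_le hge) (lt_irrefl _)
  · rintro (⟨i, hi⟩ | hd)
    · have hbi : b i = 0 := by
        have h0 := hi i
        rw [hb, Finset.sum_eq_zero_iff_of_nonneg fun _ _ => mul_self_nonneg _] at h0
        funext s
        exact mul_self_eq_zero.mp (h0 s (Finset.mem_univ _))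
      have hF0 : F = 0 := by
        rw [hF]
        apply Finset.prod_eq_zero (Finset.mem_univ i)
        simp [HafAux.lin, hbi]
      rw [hF0, mul_zero, HafAux.lap_iter_zero, map_zero] at hhaf
      rw [(mul_eq_zero.mp hhaf).resolve_left hcpos.ne']
      exact (Finset.prod_eq_zero (f := fun k => A k k) (Finset.mem_univ i) (hi i)).symm
    · obtain ⟨h1, h2⟩ := HafAux.diag_case b (fun i j hij => by rw [← hb]; exact hd i j hij)
        Finset.univ
      rw [Finset.card_univ, Fintype.card_fin, ← hF] at h2
      rw [← hF] at h1
      simp only [← hb] at h2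
      rw [HafAux.lap_iter_harm n F h1, h2, ← mul_assoc, ← hc] at hhaf
      exact mul_left_cancel₀ hcpos.ne' hhaf
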